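/- Let ℓ ≥ 3 and n be positive integers and let F be an edgewise maximal graph on n vertices with maximum degree at most 2 and girth at least ℓ (i.e., F ∈ F*^ℓ(n,2)). Then F is the vertex-disjoint union of cycles, each of length at least ℓ, together with at most one path, and if such a path is present its length k satisfies 0 ≤ k ≤ ℓ − 2. -/

import Mathlib

open Filter Finset SimpleGraph
open scoped Classical

/-- The degree of a vertex. -/
noncomputable def ndeg {V : Type*} (G : SimpleGraph V) (v : V) : ℕ :=
  (G.neighborSet v).ncard

/-- `F` belongs to `F^ℓ(n,2)`: maximum degree at most `2` and girth at least `ℓ`. -/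
def InFamily (n ℓ : ℕ) (F : SimpleGraph (Fin n)) : Prop :=
  (∀ v, ndeg F v ≤ 2) ∧ (ℓ : ℕ∞) ≤ F.girth

/-- `F` belongs to `F*^ℓ(n,2)`: an edgewise maximal member of `F^ℓ(n,2)`. -/
def EdgeMaximal (n ℓ : ℕ) (F : SimpleGraph (Fin n)) : Prop :=
  InFamily n ℓ F ∧ ∀ F' : SimpleGraph (Fin n), F ≤ F' → InFamily n ℓ F' → F' = F

theorem aux_cycle_path {V : Type*} {F G : SimpleGraph V} {x y : V}
    (hG : ∀ a b, G.Adj a b → F.Adj a b ∨ s(a, b) = s(x, y))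
    (c : G.Walk x x) (hc : c.IsCycle) (hs : c.snd = y) :
    ∃ p : F.Walk x y, p.IsPath ∧ p.length + 1 = c.length := by
  subst hs
  have hnn := hc.not_nil
  have h1 := hc
  rw [← c.cons_tail_eq hnn, Walk.cons_isCycle_iff] at h1
  have hp : ∀ e ∈ c.tail.edges, e ∈ F.edgeSet := by
    intro e he
    have h2 := c.tail.edges_subset_edgeSet he
    induction e with
    | _ a b =>
      rcases hG a b h2 with h | h
      · exact h
      · rw [h] at he; exact absurd he h1.2
  refine ⟨(c.tail.transfer F hp).reverse, (h1.1.transfer hp).reverse, ?_⟩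
  rw [Walk.length_reverse, Walk.length_transfer, Walk.length_tail_add_one hnn]

theorem aux_cycle_path' {V : Type*} {F G : SimpleGraph V} {x y z : V}
    (hG : ∀ a b, G.Adj a b → F.Adj a b ∨ s(a, b) = s(x, y))
    (c : G.Walk z z) (hc : c.IsCycle) (hs : s(x, y) ∈ c.edges) :
    ∃ p : F.Walk x y, p.IsPath ∧ p.length + 1 = c.length := by
  have hx : x ∈ c.support := c.fst_mem_support_of_mem_edges hs
  have hc' := hc.rotate hx
  have hy : y ∈ (c.rotate x hx).toSubgraph.neighborSet x := by
    rw [Subgraph.mem_neighborSet, ← Subgraph.mem_edgeSet, Walk.mem_edges_toSubgraph]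
    exact (c.rotate_edges x hx).mem_iff.2 hs
  rw [hc'.neighborSet_toSubgraph_endpoint] at hy
  rcases hy with hy | hy
  · obtain ⟨p, h1, h2⟩ := aux_cycle_path hG _ hc' hy.symm
    exact ⟨p, h1, by simpa using h2⟩
  · obtain ⟨p, h1, h2⟩ := aux_cycle_path hG _ hc'.reverse
      (by rw [Walk.snd_reverse]; exact hy.symm)
    exact ⟨p, h1, by simpa using h2⟩

theorem aux_closed {n : ℕ} {F : SimpleGraph (Fin n)} (hd : ∀ v, ndeg F v ≤ 2)
    {u v : Fin n} (w : F.Walk u v) (hw : w.IsPath) (huv : u ≠ v)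
    (hu : ndeg F u ≤ 1) (hv : ndeg F v ≤ 1) {a b : Fin n} (ha : a ∈ w.support)
    (hab : F.Adj a b) : b ∈ w.support := by
  by_contra hb
  have hpos : 0 < w.length := by
    rcases Nat.eq_zero_or_pos w.length with h | h
    · exact absurd (Walk.eq_of_length_eq_zero h) huv
    · exact h
  have key1 : ∀ a c : Fin n, ndeg F a ≤ 1 → F.Adj a b → F.Adj a c → c ∈ w.support → False := by
    intro a c h h1 h2 h3
    have : b = c := (Set.ncard_le_one (Set.toFinite _)).1 h b h1 c h2
    exact hb (this ▸ h3)
  obtain ⟨i, rfl, hi⟩ := Walk.mem_support_iff_exists_getVert.1 ha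
  by_cases h0 : i = 0
  · subst h0
    refine key1 _ (w.getVert 1) ?_ hab (w.adj_getVert_succ hpos) (w.getVert_mem_support 1)
    simpa using hu
  by_cases hl : i = w.length
  · refine key1 _ (w.getVert (i - 1)) ?_ hab ?_ (w.getVert_mem_support _)
    · subst hl; simpa using hv
    · have := w.adj_getVert_succ (i := i - 1) (by omega)
      rw [Nat.sub_add_cancel (by omega)] at this
      exact this.symm
  have e1 := (w.adj_getVert_succ (i := i - 1) (by omega)).symm
  rw [Nat.sub_add_cancel (by omega)] at e1
  have e2 := w.adj_getVert_succ (i := i) (by omega)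
  have hne : w.getVert (i - 1) ≠ w.getVert (i + 1) := by
    intro h
    have := hw.getVert_injOn (show i - 1 ≤ w.length by omega) (show i + 1 ≤ w.length by omega) h
    omega
  have hb1 : b ≠ w.getVert (i - 1) := fun h => hb (h ▸ w.getVert_mem_support _)
  have hb2 : b ≠ w.getVert (i + 1) := fun h => hb (h ▸ w.getVert_mem_support _)
  have h3 : ({b, w.getVert (i - 1), w.getVert (i + 1)} : Set (Fin n)).ncard = 3 :=
    Set.ncard_eq_three.2 ⟨_, _, _, hb1, hb2, hne, rfl⟩
  have h4 := Set.ncard_le_ncard (t := F.neighborSet (w.getVert i))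
    (s := {b, w.getVert (i - 1), w.getVert (i + 1)}) (by
      rintro z (rfl | rfl | rfl)
      · exact hab
      · exact e1
      · exact e2) (Set.toFinite _)
  have := hd (w.getVert i)
  unfold ndeg at this
  omega

theorem aux_path {n ℓ : ℕ} (hℓ : 3 ≤ ℓ) {F : SimpleGraph (Fin n)} (hF : EdgeMaximal n ℓ F)
    {x y : Fin n} (hxy : x ≠ y) (hx : ndeg F x ≤ 1) (hy : ndeg F y ≤ 1) :
    ∃ p : F.Walk x y, p.IsPath ∧ p.length ≤ ℓ - 2 := by
  by_cases hadj : F.Adj x y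
  · refine ⟨hadj.toWalk, ?_, ?_⟩
    · simp [hxy]
    · simp; omega
  obtain ⟨⟨hd, hg⟩, hmax⟩ := hF
  have hg' : ℓ ≤ F.girth := by exact_mod_cast hg
  have hna : ¬ F.IsAcyclic := by
    intro h
    rw [← girth_eq_zero] at h
    omega
  have hle : F ≤ F ⊔ edge x y := le_sup_left
  have hnin : ¬ InFamily n ℓ (F ⊔ edge x y) := by
    intro h
    have := hmax _ hle h
    apply hadj
    rw [← this]
    simp [edge_adj, hxy]
  have hG : ∀ a b, (F ⊔ edge x y).Adj a b → F.Adj a b ∨ s(a, b) = s(x, y) := by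
    intro a b h
    rw [sup_adj, edge_adj] at h
    rcases h with h | h
    · exact Or.inl h
    · right; rw [Sym2.eq_iff]; exact h.1
  have hd' : ∀ v, ndeg (F ⊔ edge x y) v ≤ 2 := by
    intro v
    have main : ∀ z, ndeg F v ≤ 1 →
        (F ⊔ edge x y).neighborSet v ⊆ insert z (F.neighborSet v) →
        ndeg (F ⊔ edge x y) v ≤ 2 := by
      intro z h1 h2
      have h3 := Set.ncard_le_ncard h2 (Set.toFinite _)
      have h4 := Set.ncard_insert_le z (F.neighborSet v)
      unfold ndeg at *
      omega
    by_cases h1 : v = x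
    · subst h1
      refine main y hx ?_
      intro b hb
      rcases hG _ _ hb with h | h
      · exact Or.inr h
      · left; rw [Sym2.eq_iff] at h; tauto
    by_cases h2 : v = y
    · subst h2
      refine main x hy ?_
      intro b hb
      rcases hG _ _ hb with h | h
      · exact Or.inr h
      · left; rw [Sym2.eq_iff] at h; tauto
    · refine le_trans (Set.ncard_le_ncard ?_ (Set.toFinite _)) (hd v)
      intro b hb
      rcases hG _ _ hb with h | h
      · exact h
      · rw [Sym2.eq_iff] at h; tauto
  have hgl : (F ⊔ edge x y).girth < ℓ := by
    by_contra h
    exact hnin ⟨hd', by exact_mod_cast not_lt.1 h⟩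
  obtain ⟨a, c, hc, hcl⟩ := exists_girth_eq_length.2 (fun h => hna (IsAcyclic.anti hle h))
  by_cases hs : s(x, y) ∈ c.edges
  · obtain ⟨p, h1, h2⟩ := aux_cycle_path' hG c hc hs
    exact ⟨p, h1, by omega⟩
  · exfalso
    have hp : ∀ e ∈ c.edges, e ∈ F.edgeSet := by
      intro e he
      have h2 := c.edges_subset_edgeSet he
      induction e with
      | _ a b =>
        rcases hG a b h2 with h | h
        · exact h
        · rw [h] at he; exact absurd he hs
    have := girth_le_length (hc.transfer hp)
    rw [Walk.length_transfer] at this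
    omega

/-- Every `F ∈ F*^ℓ(n,2)` is a vertex-disjoint union of cycles, each of length at least
`ℓ`, together with at most one path, of length at most `ℓ - 2` if present.  (Since `F` has
maximum degree at most `2`, this is expressed as: every cycle of `F` has length at least
`ℓ`, and either every vertex has degree `2` — all components are cycles — or there is a
path of length at most `ℓ - 2` whose endpoints have degree at most `1` in `F` and such
that every vertex off this path has degree `2`.) -/
theorem structure_of_edge_maximal
    (ℓ n : ℕ) (hℓ : 3 ≤ ℓ) (hn : 0 < n)
    (F : SimpleGraph (Fin n)) (hF : EdgeMaximal n ℓ F) :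
    (∀ (v : Fin n) (c : F.Walk v v), c.IsCycle → ℓ ≤ c.length) ∧
    ((∀ v, ndeg F v = 2) ∨
      ∃ (u v : Fin n) (w : F.Walk u v), w.IsPath ∧ w.length ≤ ℓ - 2 ∧
        ndeg F u ≤ 1 ∧ ndeg F v ≤ 1 ∧ ∀ x : Fin n, x ∉ w.support → ndeg F x = 2) := by
  have hd := hF.1.1
  have hg : ℓ ≤ F.girth := by exact_mod_cast hF.1.2
  refine ⟨fun v c hc => hg.trans (girth_le_length hc), ?_⟩
  by_cases hall : ∀ v, ndeg F v = 2
  · exact Or.inl hall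
  right
  push Not at hall
  obtain ⟨u, hu⟩ := hall
  have hu1 : ndeg F u ≤ 1 := by have := hd u; omega
  by_cases hex : ∃ v, u ≠ v ∧ ndeg F v ≤ 1
  · obtain ⟨v, huv, hv⟩ := hex
    obtain ⟨w, hw, hwl⟩ := aux_path hℓ hF huv hu1 hv
    refine ⟨u, v, w, hw, hwl, hu1, hv, ?_⟩
    intro x hx
    by_contra hx2
    have hx1 : ndeg F x ≤ 1 := by have := hd x; omega
    have hux : u ≠ x := by rintro rfl; exact hx w.start_mem_support
    obtain ⟨q, -, -⟩ := aux_path hℓ hF hux hu1 hx1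
    have : ∀ (a b : Fin n) (q : F.Walk a b), a ∈ w.support → b ∈ w.support := by
      intro a b q
      induction q with
      | nil => exact id
      | cons h q ih => exact fun ha => ih (aux_closed hd w hw huv hu1 hv ha h)
    exact hx (this _ _ q w.start_mem_support)
  · refine ⟨u, u, Walk.nil, by simp, by simp, hu1, hu1, ?_⟩
    intro x hx
    by_contra hx2
    refine hex ⟨x, ?_, ?_⟩
    · rintro rfl; simp at hx
    · have := hd x; omega
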